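/- Let ρ be a density operator on ℂ^d with eigenvalue vector r, let λ be a partition of k with at most d parts, and let P_λ be the projection onto the λ-isotypic component of (ℂ^d)^{⊗k} under the Schur–Weyl decomposition. Then tr(P_λ ρ^{⊗k}) ≤ (k+1)^{d(d−1)/2} exp(−k D(λ̄ || r)), where λ̄ = λ/k and D is the Kullback-Leibler divergence. -/

import Mathlib

/-!
Let `λ` have `d` rows, and let `x` be the word labelling every box of a tableau of shape `λ` with
its row. The row symmetrizer maps every vector into the span of the orbit `g^{⊗k} e_x`: the vectors
`g^{⊗k} e_x` form a polynomial curve in the entries of `g`, so that this span contains each of its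
coefficients. For `g` in a dense set, Gaussian elimination gives `g = n u` with `n` lower
unitriangular and `u` upper triangular, and on `e_x` the column antisymmetrizer turns `u^{⊗k}` into
a scalar. Hence the `λ`-isotypic component lies in the span of the vectors `n^{⊗k} e_x` with `x`
running over the words of content `λ`.

Expanding `n^{⊗k} e_x` in the `d(d-1)/2` free entries of `n`, with exponents at most `k`, bounds the
dimension of this span by `(k+1)^{d(d-1)/2}` times the number of words of content `λ`; and every
basis vector `e_y` that occurs in it satisfies `y ≥ x` for such a word `x`, so that its eigenvalue
`∏ r (y j)` under `ρ^{⊗k}` is at most `∏ r_i^{λ_i}`. As the words of content `λ` have total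
probability at most one under the product distribution `λ̄^{⊗k}`, their number is at most
`∏ λ̄_i^{-λ_i}`, which turns the product of the two bounds into the relative entropy.
-/

open Matrix Finset Nat ComplexOrder

noncomputable section

/-- The cells of the Young diagram of `lam` (rows indexed `0, …, d−1`). -/
def youngCells (d k : ℕ) (lam : ℕ → ℕ) : Finset (ℕ × ℕ) :=
  (range d ×ˢ range k).filter fun c => c.2 < lam c.1

/-- The matrix of the action of the permutation `π ∈ S_k` on `(ℂ^d)^{⊗k}`, permuting
the tensor factors: basis vectors are indexed by functions `Fin k → Fin d`. -/
def permMat (d k : ℕ) (π : Equiv.Perm (Fin k)) :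
    Matrix (Fin k → Fin d) (Fin k → Fin d) ℂ :=
  Matrix.of fun v w => if v = w ∘ ⇑π⁻¹ then 1 else 0

/-- The Young symmetry operator `e(T)` of a tableau, acting on `(ℂ^d)^{⊗k}`:
the signed sum over the column group times the sum over the row group, where the tableau is
given as a numbering `t : Fin k → ℕ × ℕ` of the boxes. -/
def youngSymMat (d k : ℕ) (t : Fin k → ℕ × ℕ) :
    Matrix (Fin k → Fin d) (Fin k → Fin d) ℂ :=
  (∑ π ∈ univ.filter (fun π : Equiv.Perm (Fin k) => ∀ j, (t (π j)).2 = (t j).2),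
      (((Equiv.Perm.sign π : ℤ) : ℂ) • permMat d k π)) *
    ∑ π ∈ univ.filter (fun π : Equiv.Perm (Fin k) => ∀ j, (t (π j)).1 = (t j).1),
      permMat d k π

/-- The `lam`-isotypic component `U_lam ⊗ V_lam` of `(ℂ^d)^{⊗k}` in the Schur–Weyl
decomposition: the span of the `S_k`-translates of the images of the Young symmetry
operators of tableaux of shape `lam`. -/
def isotypic (d k : ℕ) (lam : ℕ → ℕ) : Submodule ℂ ((Fin k → Fin d) → ℂ) :=
  Submodule.span ℂ {x | ∃ t : Fin k → ℕ × ℕ,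
    Set.BijOn t Set.univ ↑(youngCells d k lam) ∧
    ∃ (π : Equiv.Perm (Fin k)) (v : (Fin k → Fin d) → ℂ),
      x = (permMat d k π).mulVec ((youngSymMat d k t).mulVec v)}

/-- The `k`-fold tensor power `ρ^{⊗k}` of a matrix `ρ` on `ℂ^d`. -/
def tensorPow (d k : ℕ) (ρ : Matrix (Fin d) (Fin d) ℂ) :
    Matrix (Fin k → Fin d) (Fin k → Fin d) ℂ :=
  Matrix.of fun v w => ∏ j, ρ (v j) (w j)

section Content

variable {ι α : Type*} [Fintype ι] [DecidableEq α]

/-- The word `x : ι → α` has content `μ` (is of type `μ`) if every letter `a` occurs in it exactly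
`μ a` times. -/
def HasContent (μ : α → ℕ) (x : ι → α) : Prop :=
  ∀ a, #{j | x j = a} = μ a

instance [Fintype α] (μ : α → ℕ) : DecidablePred (HasContent (ι := ι) μ) :=
  fun _ => inferInstanceAs (Decidable (∀ _, _))

variable {μ : α → ℕ} {x y : ι → α}

lemma HasContent.comp_perm (hx : HasContent μ x) (π : Equiv.Perm ι) : HasContent μ (x ∘ π) :=
  fun a => by rw [← hx a]; exact Finset.card_equiv π (by simp)

lemma HasContent.exists_perm (hx : HasContent μ x) (hy : HasContent μ y) :
    ∃ π : Equiv.Perm ι, y ∘ π = x := by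
  have fibers (a : α) : {j // x j = a} ≃ {j // y j = a} :=
    Fintype.equivOfCardEq (by rw [Fintype.card_subtype, Fintype.card_subtype, hx a, hy a])
  exact ⟨Equiv.ofFiberEquiv fibers, funext (Equiv.ofFiberEquiv_map fibers)⟩

lemma HasContent.prod_comp [Fintype α] {M : Type*} [CommMonoid M] (hx : HasContent μ x)
    (f : α → M) : ∏ j, f (x j) = ∏ a, f a ^ μ a := by
  rw [← prod_fiberwise univ x]
  exact prod_congr rfl fun a _ => by
    rw [prod_congr rfl (fun j hj => by rw [(mem_filter.mp hj).2]), prod_const, hx a]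

lemma card_hasContent_mul_prod_pow_le_one [Fintype α] [DecidableEq ι] (μ : α → ℕ) {p : α → ℝ}
    (hp : ∀ a, 0 ≤ p a) (hsum : ∑ a, p a = 1) :
    #{x : ι → α | HasContent μ x} * ∏ a, p a ^ μ a ≤ 1 :=
  calc #{x : ι → α | HasContent μ x} * ∏ a, p a ^ μ a
      = ∑ x : ι → α with HasContent μ x, ∏ j, p (x j) := by
        rw [← nsmul_eq_mul, ← sum_const]
        exact sum_congr rfl fun x hx => ((mem_filter.mp hx).2.prod_comp p).symm
    _ ≤ ∑ x : ι → α, ∏ j, p (x j) :=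
        sum_le_sum_of_subset_of_nonneg (filter_subset _ _)
          fun x _ _ => prod_nonneg fun j _ => hp _
    _ = ∏ _j : ι, ∑ a, p a := by rw [prod_univ_sum, Fintype.piFinset_univ]
    _ = 1 := by simp [hsum]

end Content

section Entropy

variable {α : Type*} [Fintype α] {k : ℕ}

lemma prod_pow_le_prod_pow_mul_exp_neg_relEntropy (hk : 0 < k) (μ : α → ℕ) {r : α → ℝ}
    (hr : ∀ a, 0 ≤ r a) :
    ∏ a, r a ^ μ a ≤ (∏ a, ((μ a : ℝ) / k) ^ μ a) *
      Real.exp (-(k : ℝ) * ∑ a, (if μ a = 0 then 0 else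
        ((μ a : ℝ) / k) * (Real.log ((μ a : ℝ) / k) - Real.log (r a)))) := by
  rw [mul_sum, Real.exp_sum, ← prod_mul_distrib]
  refine prod_le_prod (fun a _ => pow_nonneg (hr a) _) fun a _ => ?_
  rcases eq_or_ne (μ a) 0 with hμ | hμ
  · simp [hμ]
  rcases (hr a).eq_or_lt with hra | hra
  · rw [← hra, zero_pow hμ]
    positivity
  have hq : 0 < (μ a : ℝ) / k := by positivity
  apply le_of_eq
  calc r a ^ μ a = Real.exp (μ a * Real.log ((μ a : ℝ) / k)) *
        Real.exp (-(μ a * (Real.log ((μ a : ℝ) / k) - Real.log (r a)))) := by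
        rw [← Real.exp_add, ← Real.exp_log (pow_pos hra _), Real.log_pow]
        ring_nf
    _ = _ := by
        rw [if_neg hμ, Real.exp_nat_mul, Real.exp_log hq]
        field_simp

lemma card_hasContent_mul_prod_pow_le_exp_neg_relEntropy [DecidableEq α] (hk : 0 < k) {μ : α → ℕ}
    (hμ : ∑ a, μ a = k) {r : α → ℝ} (hr : ∀ a, 0 ≤ r a) :
    #{x : Fin k → α | HasContent μ x} * ∏ a, r a ^ μ a ≤
      Real.exp (-(k : ℝ) * ∑ a, (if μ a = 0 then 0 else
        ((μ a : ℝ) / k) * (Real.log ((μ a : ℝ) / k) - Real.log (r a)))) := by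
  have sum_freq : ∑ a, (μ a : ℝ) / k = 1 := by
    rw [← sum_div, ← Nat.cast_sum, hμ, div_self (by exact_mod_cast hk.ne')]
  refine (mul_le_mul_of_nonneg_left (prod_pow_le_prod_pow_mul_exp_neg_relEntropy hk μ hr)
    (Nat.cast_nonneg _)).trans ?_
  rw [← mul_assoc]
  exact mul_le_of_le_one_left (Real.exp_nonneg _)
    (card_hasContent_mul_prod_pow_le_one μ (fun _ => by positivity) sum_freq)

end Entropy

section LowerUnitriangular

variable {m R : Type*} [LinearOrder m] [CommRing R]

/-- A lower triangular matrix with ones on the diagonal. -/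
def IsLowerUnitriangular (n : Matrix m m R) : Prop :=
  n.IsLowerTriangular ∧ ∀ a, n a a = 1

lemma IsLowerUnitriangular.one : IsLowerUnitriangular (1 : Matrix m m R) :=
  ⟨blockTriangular_one, fun _ => one_apply_eq _⟩

lemma IsLowerUnitriangular.mul [Fintype m] {n n' : Matrix m m R} (hn : IsLowerUnitriangular n)
    (hn' : IsLowerUnitriangular n') : IsLowerUnitriangular (n * n') := by
  refine ⟨hn.1.mul hn'.1, fun a => ?_⟩
  rw [mul_apply, sum_eq_single a, hn.2, hn'.2, one_mul]
  · intro b _ hba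
    rcases hba.lt_or_gt with h | h
    · rw [hn'.1 h, mul_zero]
    · rw [hn.1 h, zero_mul]
  · simp

/-- The matrix `h` has no nonzero entry below the diagonal in the columns of `s`: the state of
Gaussian elimination after these columns. -/
def IsUpperTriangularOn (s : Finset m) (h : Matrix m m R) : Prop :=
  ∀ b ∈ s, ∀ a, b < a → h a b = 0

end LowerUnitriangular

section Gauss

variable {m 𝕜 : Type*} [Fintype m] [LinearOrder m]

lemma exists_lowerUnitriangular_mul_eq_of_pivot_ne_zero [Field 𝕜] {s : Finset m} {c : m}
    (hs : ∀ b ∈ s, b < c) {h : Matrix m m 𝕜} (hh : IsUpperTriangularOn s h) (hc : h c c ≠ 0) :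
    ∃ n u, IsLowerUnitriangular n ∧ IsUpperTriangularOn (insert c s) u ∧ n * u = h := by
  set l : m → 𝕜 := fun a => if c < a then h a c / h c c else 0 with hl
  have hlc : l c = 0 := if_neg (lt_irrefl c)
  refine ⟨1 + vecMulVec l (Pi.single c 1), h - vecMulVec l (h c),
    ⟨fun a b (hab : a < b) => ?_, fun a => ?_⟩, fun b hb a hba => ?_, ?_⟩
  · rcases eq_or_ne b c with rfl | hbc
    · simp [vecMulVec_apply, hl, hab.ne, hab.not_gt]
    · simp [vecMulVec_apply, hab.ne, hbc]
  · rcases eq_or_ne a c with rfl | hac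
    · simp [vecMulVec_apply, hlc]
    · simp [vecMulVec_apply, hac]
  · rcases mem_insert.mp hb with rfl | hb
    · simp [vecMulVec_apply, hl, hba, hc]
    · simp [vecMulVec_apply, hh b hb a hba, hh b hb c (hs b hb)]
  · have hrow : (h - vecMulVec l (h c)) c = h c := by ext; simp [vecMulVec_apply, hlc]
    rw [add_mul, one_mul, vecMulVec_mul, single_one_vecMul, row, hrow, sub_add_cancel]

/-- The set of `n * u` with `n` lower unitriangular and `u` upper triangular in the columns of
`s`. -/
def partialLU (𝕜 : Type*) [Field 𝕜] (s : Finset m) : Set (Matrix m m 𝕜) :=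
  {g | ∃ n u, IsLowerUnitriangular n ∧ IsUpperTriangularOn s u ∧ n * u = g}

lemma partialLU_subset_closure_insert [NontriviallyNormedField 𝕜] {s : Finset m} {c : m}
    (hs : ∀ b ∈ s, b < c) : partialLU 𝕜 s ⊆ closure (partialLU 𝕜 (insert c s)) := by
  rintro _ ⟨n, h, hn, hh, rfl⟩
  let perturb (ε : 𝕜) : Matrix m m 𝕜 := n * (h + ε • single c c 1)
  have mem_of_pivot_ne_zero {ε : 𝕜} (hε : ε ≠ -h c c) :
      perturb ε ∈ partialLU 𝕜 (insert c s) := by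
    obtain ⟨n', u, hn', hu, hnu⟩ := exists_lowerUnitriangular_mul_eq_of_pivot_ne_zero hs
      (h := h + ε • single c c 1)
      (fun b hb a hba => by simp [hh b hb a hba, (hs b hb).ne'])
      (by simpa [add_eq_zero_iff_neg_eq, eq_comm] using hε)
    exact ⟨n * n', u, hn.mul hn', hu, by rw [mul_assoc, hnu]⟩
  have perturb_zero : perturb 0 = n * h := by simp [perturb]
  have perturb_cont : Continuous perturb := by fun_prop
  rw [← perturb_zero]
  exact map_mem_closure perturb_cont (dense_compl_singleton (-h c c) 0)
    fun _ => mem_of_pivot_ne_zero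

lemma dense_partialLU [NontriviallyNormedField 𝕜] (s : Finset m) : Dense (partialLU 𝕜 s) := by
  induction s using Finset.induction_on_max with
  | empty =>
    exact dense_univ.mono fun g _ => ⟨1, g, .one, by simp [IsUpperTriangularOn], one_mul g⟩
  | insert c s hs ih => exact dense_closure.mp (ih.mono (partialLU_subset_closure_insert hs))

lemma dense_lowerUnitriangular_mul_upperTriangular [NontriviallyNormedField 𝕜] :
    Dense {g : Matrix m m 𝕜 |
      ∃ n u, IsLowerUnitriangular n ∧ u.IsUpperTriangular ∧ n * u = g} := by
  refine (dense_partialLU univ).mono ?_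
  rintro g ⟨n, u, hn, hu, rfl⟩
  exact ⟨n, u, hn, fun a b hab => hu b (mem_univ b) a hab, rfl⟩

end Gauss

section PolynomialCurve

variable {K V ι σ : Type*} [Field K] [Infinite K] [AddCommGroup V] [Module K V] [Fintype ι]
  [DecidableEq σ]

lemma sum_filter_monomial_mem_of_forall_sum_mem (W : Submodule K V) (α : ι → σ →₀ ℕ) (v : ι → V)
    (hW : ∀ G : σ → K, ∑ i, ((α i).prod fun s n => G s ^ n) • v i ∈ W) (a : σ →₀ ℕ) :
    ∑ i with α i = a, v i ∈ W := by
  by_contra hmem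
  obtain ⟨f, hf, hWf⟩ := Submodule.exists_le_ker_of_notMem hmem
  have hpoly : ∑ i, MvPolynomial.monomial (α i) (f (v i)) = 0 := by
    refine MvPolynomial.funext fun G => ?_
    have := hWf (hW G)
    simpa [MvPolynomial.eval_monomial, mul_comm] using this
  apply hf
  rw [map_sum, sum_filter]
  simpa [MvPolynomial.coeff_sum, MvPolynomial.coeff_monomial]
    using congrArg (MvPolynomial.coeff a) hpoly

end PolynomialCurve

section TensorPower

variable {d k : ℕ}

lemma tensorPow_mul (g h : Matrix (Fin d) (Fin d) ℂ) :
    tensorPow d k (g * h) = tensorPow d k g * tensorPow d k h := by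
  ext v w
  simp only [tensorPow, mul_apply, of_apply, ← prod_mul_distrib, prod_univ_sum,
    Fintype.piFinset_univ]

lemma tensorPow_diagonal (f : Fin d → ℂ) :
    tensorPow d k (diagonal f) = diagonal fun x => ∏ j, f (x j) := by
  ext v w
  rcases eq_or_ne v w with rfl | h
  · simp [tensorPow]
  · obtain ⟨j, hj⟩ := Function.ne_iff.mp h
    rw [diagonal_apply_ne _ h, tensorPow, of_apply]
    exact prod_eq_zero (mem_univ j) (diagonal_apply_ne _ hj)

lemma tensorPow_one : tensorPow d k 1 = 1 := by
  rw [← diagonal_one, tensorPow_diagonal]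
  simp

lemma conjTranspose_tensorPow (g : Matrix (Fin d) (Fin d) ℂ) :
    (tensorPow d k g)ᴴ = tensorPow d k gᴴ := by
  ext v w
  simp [tensorPow, conjTranspose_apply]

lemma continuous_tensorPow : Continuous (tensorPow d k) :=
  continuous_matrix fun v w => by
    simp only [tensorPow, of_apply]
    fun_prop

lemma commute_tensorPow_permMat (g : Matrix (Fin d) (Fin d) ℂ) (π : Equiv.Perm (Fin k)) :
    Commute (tensorPow d k g) (permMat d k π) := by
  ext v w
  have hw (x : Fin k → Fin d) : v = x ∘ ⇑π⁻¹ ↔ x = v ∘ π :=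
    ⟨by rintro rfl; ext; simp, by rintro rfl; ext; simp⟩
  simp only [mul_apply, permMat, of_apply, mul_ite, mul_one, mul_zero, ite_mul, one_mul, zero_mul,
    sum_ite_eq', mem_univ, if_true, hw, tensorPow]
  rw [← Equiv.prod_comp π]
  simp

lemma permMat_mulVec_single (π : Equiv.Perm (Fin k)) (x : Fin k → Fin d) :
    permMat d k π *ᵥ Pi.single x 1 = Pi.single (x ∘ ⇑π⁻¹) 1 := by
  ext y
  simp [permMat, Pi.single_apply]

lemma tensorPow_mulVec_single (g : Matrix (Fin d) (Fin d) ℂ) (x : Fin k → Fin d) :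
    tensorPow d k g *ᵥ Pi.single x 1 = ∑ y, (∏ j, g (y j) (x j)) • Pi.single y 1 := by
  rw [mulVec_single_one]
  ext y
  simp [tensorPow, Pi.single_apply]

end TensorPower

section Symmetrizers

variable {β : Type*} [DecidableEq β]

/-- The sum of the permutations of the tensor factors that preserve `f`. If `f j` is the row of the
box `j` in a tableau, this is the row symmetrizer of the tableau. -/
def symmetrizer (d k : ℕ) (f : Fin k → β) : Matrix (Fin k → Fin d) (Fin k → Fin d) ℂ :=
  ∑ π : Equiv.Perm (Fin k) with ∀ j, f (π j) = f j, permMat d k π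

/-- The signed sum of the permutations of the tensor factors that preserve `f`. If `f j` is the
column of the box `j` in a tableau, this is the column antisymmetrizer of the tableau. -/
def antisymmetrizer (d k : ℕ) (f : Fin k → β) : Matrix (Fin k → Fin d) (Fin k → Fin d) ℂ :=
  ∑ π : Equiv.Perm (Fin k) with ∀ j, f (π j) = f j,
    ((Equiv.Perm.sign π : ℤ) : ℂ) • permMat d k π

variable {d k : ℕ} (f : Fin k → β)

lemma youngSymMat_eq_antisymmetrizer_mul_symmetrizer (t : Fin k → ℕ × ℕ) :
    youngSymMat d k t =
      antisymmetrizer d k (fun j => (t j).2) * symmetrizer d k (fun j => (t j).1) :=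
  rfl

lemma commute_tensorPow_symmetrizer (g : Matrix (Fin d) (Fin d) ℂ) :
    Commute (tensorPow d k g) (symmetrizer d k f) :=
  .sum_right _ _ _ fun π _ => commute_tensorPow_permMat g π

lemma commute_tensorPow_antisymmetrizer (g : Matrix (Fin d) (Fin d) ℂ) :
    Commute (tensorPow d k g) (antisymmetrizer d k f) :=
  .sum_right _ _ _ fun π _ => (commute_tensorPow_permMat g π).smul_right _

lemma commute_tensorPow_youngSymMat (g : Matrix (Fin d) (Fin d) ℂ) (t : Fin k → ℕ × ℕ) :
    Commute (tensorPow d k g) (youngSymMat d k t) := by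
  rw [youngSymMat_eq_antisymmetrizer_mul_symmetrizer]
  exact (commute_tensorPow_antisymmetrizer _ g).mul_right (commute_tensorPow_symmetrizer _ g)

variable {f}

lemma symmetrizer_mulVec_single_comp {π : Equiv.Perm (Fin k)} (hπ : ∀ j, f (π j) = f j)
    (y : Fin k → Fin d) :
    symmetrizer d k f *ᵥ Pi.single (y ∘ π) 1 = symmetrizer d k f *ᵥ Pi.single y 1 := by
  have hπ_inv (j : Fin k) : f (π⁻¹ j) = f j := by simpa using (hπ (π⁻¹ j)).symm
  simp only [symmetrizer, sum_mulVec, permMat_mulVec_single]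
  refine sum_equiv (Equiv.mulRight π⁻¹) (fun τ => ?_) fun τ _ => ?_
  · simp only [mem_filter, mem_univ, true_and, Equiv.coe_mulRight, Equiv.Perm.mul_apply]
    exact ⟨fun hτ j => (hτ _).trans (hπ_inv j),
      fun hτ j => by simpa [hπ] using hτ (π j)⟩
  · rw [Equiv.coe_mulRight, _root_.mul_inv_rev, inv_inv, Equiv.Perm.coe_mul, Function.comp_assoc]

lemma antisymmetrizer_mulVec_single_eq_zero {y : Fin k → Fin d} {p q : Fin k} (hpq : p ≠ q)
    (hf : f p = f q) (hy : y p = y q) : antisymmetrizer d k f *ᵥ Pi.single y 1 = 0 := by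
  simp only [antisymmetrizer, sum_mulVec, smul_mulVec, permMat_mulVec_single]
  refine sum_involution (fun π _ => π * Equiv.swap p q) (fun π _ => ?_) (fun π _ _ hπ => ?_)
    (fun π hπ => ?_) fun π _ => ?_
  · have : y ∘ ⇑(π * Equiv.swap p q)⁻¹ = y ∘ ⇑π⁻¹ :=
      funext fun j => by simp [Equiv.apply_swap_eq_self hy]
    rw [this, Equiv.Perm.sign_mul, Equiv.Perm.sign_swap hpq]
    simp
  · exact hpq (Equiv.swap_eq_one_iff.mp (mul_eq_left.mp hπ))
  · simp only [mem_filter, mem_univ, true_and, Equiv.Perm.mul_apply] at hπ ⊢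
    exact fun j => (hπ _).trans (Equiv.apply_swap_eq_self hf j)
  · simp [mul_assoc]

lemma symmetrizer_self_mulVec_single (x : Fin k → Fin d) :
    symmetrizer d k x *ᵥ Pi.single x 1 =
      (#{π : Equiv.Perm (Fin k) | ∀ j, x (π j) = x j} : ℂ) • Pi.single x 1 := by
  simp only [symmetrizer, sum_mulVec, permMat_mulVec_single]
  rw [Nat.cast_smul_eq_nsmul, ← sum_const]
  refine sum_congr rfl fun π hπ => ?_
  have : x ∘ ⇑π⁻¹ = x := funext fun j => by
    simpa using ((mem_filter.mp hπ).2 (π⁻¹ j)).symm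
  rw [this]

end Symmetrizers

section Isotypic

variable {d k : ℕ} {lam : ℕ → ℕ}

lemma isotypic_mem_invtSubmodule_tensorPow (g : Matrix (Fin d) (Fin d) ℂ) :
    isotypic d k lam ∈ Module.End.invtSubmodule (tensorPow d k g).mulVecLin := by
  refine Submodule.span_le.mpr ?_
  rintro _ ⟨t, ht, π, v, rfl⟩
  refine Submodule.subset_span ⟨t, ht, π, tensorPow d k g *ᵥ v, ?_⟩
  have := (commute_tensorPow_permMat g π).mul_right (commute_tensorPow_youngSymMat g t)
  simpa only [mulVecLin_apply, mulVec_mulVec, Matrix.mul_assoc] using congrArg (· *ᵥ v) this.eq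

end Isotypic

section RowWord

variable {d k : ℕ} {lam : ℕ → ℕ} {t : Fin k → ℕ × ℕ}

lemma mem_youngCells {c : ℕ × ℕ} :
    c ∈ youngCells d k lam ↔ c.1 < d ∧ c.2 < k ∧ c.2 < lam c.1 := by
  simp [youngCells, and_assoc]

/-- The word that labels each box of the tableau `t` with its row. -/
def rowWord (ht : Set.BijOn t Set.univ (youngCells d k lam)) (j : Fin k) : Fin d :=
  ⟨(t j).1, (mem_youngCells.mp (ht.mapsTo (Set.mem_univ j))).1⟩

variable (ht : Set.BijOn t Set.univ (youngCells d k lam))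
include ht

lemma exists_eq_of_bijOn_youngCells {a c : ℕ} (ha : a < d) (hck : c < k) (hc : c < lam a) :
    ∃ j, t j = (a, c) := by
  obtain ⟨j, -, hj⟩ := ht.surjOn (mem_coe.mpr (mem_youngCells (c := (a, c)).mpr ⟨ha, hck, hc⟩))
  exact ⟨j, hj⟩

lemma hasContent_rowWord (hle : ∀ a < d, lam a ≤ k) :
    HasContent (fun a : Fin d => lam a) (rowWord ht) := by
  intro a
  have mem_row {j : Fin k} : j ∈ ({j | rowWord ht j = a} : Finset (Fin k)) ↔ (t j).1 = a := by
    rw [mem_filter_univ, Fin.ext_iff, rowWord]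
  change _ = lam a
  rw [← card_range (lam a)]
  refine card_nbij (fun j => (t j).2) (fun j hj => ?_) (fun i hi j hj hij => ?_) fun c hc => ?_
  · rw [mem_coe, mem_range, ← mem_row.mp hj]
    exact (mem_youngCells.mp (ht.mapsTo (Set.mem_univ j))).2.2
  · exact ht.injOn (Set.mem_univ i) (Set.mem_univ j)
      (Prod.ext ((mem_row.mp hi).trans (mem_row.mp hj).symm) hij)
  · have hc := mem_range.mp hc
    obtain ⟨j, hj⟩ := exists_eq_of_bijOn_youngCells ht a.2 (hc.trans_le (hle a a.2)) hc
    exact ⟨j, mem_row.mpr (by rw [hj]), congrArg Prod.snd hj⟩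

lemma eq_rowWord_of_le (hanti : Antitone lam) {y : Fin k → Fin d} (hy : y ≤ rowWord ht)
    (hinj : ∀ p q, (t p).2 = (t q).2 → y p = y q → p = q) : y = rowWord ht := by
  -- In the first row `a` where `y` drops, `y j < a` repeats the entry of row `y j` in the column
  -- of `j`, which is still in place.
  suffices H : ∀ a j, (t j).1 = a → (y j : ℕ) = a from funext fun j => Fin.ext (H _ j rfl)
  intro a
  induction a using Nat.strong_induction_on with
  | _ a ih =>
    intro j hj
    by_contra hne
    have hlt : (y j : ℕ) < a := by
      have : (y j : ℕ) ≤ (t j).1 := hy j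
      omega
    obtain ⟨-, hcol, hlam⟩ := mem_youngCells.mp (ht.mapsTo (Set.mem_univ j))
    obtain ⟨q, hq⟩ : ∃ q, t q = ((y j : ℕ), (t j).2) :=
      exists_eq_of_bijOn_youngCells ht (y j).2 hcol
        (hlam.trans_le (hanti (by omega)))
    have hqj : q = j := hinj q j (by rw [hq]) (Fin.ext (ih _ hlt q (by rw [hq])))
    rw [hqj] at hq
    exact hlt.ne ((congrArg Prod.fst hq).symm.trans hj)

lemma antisymmetrizer_mulVec_upper_mulVec_rowWord (hanti : Antitone lam)
    {u : Matrix (Fin d) (Fin d) ℂ} (hu : u.IsUpperTriangular) :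
    antisymmetrizer d k (fun j => (t j).2) *ᵥ tensorPow d k u *ᵥ Pi.single (rowWord ht) 1 =
      (∏ j, u (rowWord ht j) (rowWord ht j)) •
        antisymmetrizer d k (fun j => (t j).2) *ᵥ Pi.single (rowWord ht) 1 := by
  simp only [tensorPow_mulVec_single, mulVec_sum, mulVec_smul]
  refine sum_eq_single (rowWord ht) (fun y _ hne => ?_) (by simp)
  by_cases hy : y ≤ rowWord ht
  · have hrep : ∃ p q, (t p).2 = (t q).2 ∧ y p = y q ∧ p ≠ q := by
      by_contra! h
      exact hne (eq_rowWord_of_le ht hanti hy h)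
    obtain ⟨p, q, hcol, hpq, hne⟩ := hrep
    rw [antisymmetrizer_mulVec_single_eq_zero hne hcol hpq, smul_zero]
  · obtain ⟨j, hj⟩ : ∃ j, rowWord ht j < y j := by simpa [Pi.le_def] using hy
    rw [prod_eq_zero (mem_univ j) (hu hj), zero_smul]

end RowWord

section TensorPowSpan

lemma hasContent_sum_single {ι σ : Type*} [Fintype ι] [DecidableEq σ] (f : ι → σ) :
    HasContent ⇑(∑ j, Finsupp.single (f j) 1) f := fun s => by
  simp [Finsupp.finsetSum_apply, Finsupp.single_apply]

variable {d k : ℕ}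

/-- The span of the orbit of the basis vector `e_x` under the operators `g^{⊗k}`. -/
def tensorPowSpan (x : Fin k → Fin d) : Submodule ℂ ((Fin k → Fin d) → ℂ) :=
  Submodule.span ℂ (Set.range fun g => tensorPow d k g *ᵥ Pi.single x 1)

lemma sum_single_mem_tensorPowSpan (x : Fin k → Fin d) (a : Fin d × Fin d →₀ ℕ) :
    ∑ y : Fin k → Fin d with ∑ j, Finsupp.single (y j, x j) 1 = a, Pi.single y 1 ∈
      tensorPowSpan x := by
  refine sum_filter_monomial_mem_of_forall_sum_mem _ _ _ (fun G => ?_) a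
  have hG : tensorPow d k (.of fun a b => G (a, b)) *ᵥ Pi.single x 1 ∈ tensorPowSpan x :=
    Submodule.subset_span ⟨_, rfl⟩
  rw [tensorPow_mulVec_single] at hG
  convert hG using 3 with y
  rw [← Finsupp.prod_finsetSum_index (fun _ => pow_zero _) fun _ _ _ => pow_add _ _ _]
  simp

lemma symmetrizer_mulVec_mem_tensorPowSpan_of_mem {x : Fin k → Fin d} {w : (Fin k → Fin d) → ℂ}
    (hw : w ∈ tensorPowSpan x) : symmetrizer d k x *ᵥ w ∈ tensorPowSpan x := by
  suffices tensorPowSpan x ≤ (tensorPowSpan x).comap (symmetrizer d k x).mulVecLin from this hw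
  refine Submodule.span_le.mpr ?_
  rintro _ ⟨g, rfl⟩
  rw [SetLike.mem_coe, Submodule.mem_comap, mulVecLin_apply, mulVec_mulVec,
    ← (commute_tensorPow_symmetrizer x g).eq, ← mulVec_mulVec, symmetrizer_self_mulVec_single,
    mulVec_smul]
  exact Submodule.smul_mem _ _ (Submodule.subset_span ⟨g, rfl⟩)

lemma symmetrizer_mulVec_single_mem_tensorPowSpan (x y : Fin k → Fin d) :
    symmetrizer d k x *ᵥ Pi.single y 1 ∈ tensorPowSpan x := by
  set exponent : (Fin k → Fin d) → Fin d × Fin d →₀ ℕ :=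
    fun y' => ∑ j, Finsupp.single (y' j, x j) 1 with hexp
  have symm_eq (y' : Fin k → Fin d) (hy' : exponent y' = exponent y) :
      symmetrizer d k x *ᵥ Pi.single y' (1 : ℂ) = symmetrizer d k x *ᵥ Pi.single y 1 := by
    obtain ⟨π, hπ⟩ := (hasContent_sum_single fun j => (y j, x j)).exists_perm
      (y := fun j => (y' j, x j)) (by
        have := hasContent_sum_single fun j => (y' j, x j)
        rwa [show ∑ j, Finsupp.single (y' j, x j) 1 = ∑ j, Finsupp.single (y j, x j) 1 from hy']
          at this)
    rw [← symmetrizer_mulVec_single_comp (π := π) fun j => congrArg Prod.snd (congrFun hπ j)]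
    congr 2
    exact funext fun j => congrArg Prod.fst (congrFun hπ j)
  have orbit_mem := symmetrizer_mulVec_mem_tensorPowSpan_of_mem
    (sum_single_mem_tensorPowSpan x (exponent y))
  -- The words that share the monomial of `y` all have the same symmetrization.
  rw [mulVec_sum, sum_congr rfl fun y' hy' => symm_eq y' (mem_filter.mp hy').2, sum_const,
    ← Nat.cast_smul_eq_nsmul ℂ] at orbit_mem
  refine (Submodule.smul_mem_iff _ ?_).mp orbit_mem
  exact_mod_cast (card_pos.mpr ⟨y, by simp [hexp]⟩).ne'

lemma symmetrizer_mulVec_mem_tensorPowSpan (x : Fin k → Fin d) (v : (Fin k → Fin d) → ℂ) :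
    symmetrizer d k x *ᵥ v ∈ tensorPowSpan x := by
  rw [mulVec_eq_sum]
  refine Submodule.sum_mem _ fun y _ => ?_
  rw [op_smul_eq_smul]
  have := symmetrizer_mulVec_single_mem_tensorPowSpan x y
  rw [mulVec_single_one] at this
  exact Submodule.smul_mem _ _ this

end TensorPowSpan

section LowerSpan

variable {d k : ℕ} {μ : Fin d → ℕ}

/-- The span of the vectors `n^{⊗k} e_x` for `n` lower unitriangular and `x` a word of
content `μ`. -/
def lowerSpan (k : ℕ) (μ : Fin d → ℕ) : Submodule ℂ ((Fin k → Fin d) → ℂ) :=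
  Submodule.span ℂ {w | ∃ n x, IsLowerUnitriangular n ∧ HasContent μ x ∧
    w = tensorPow d k n *ᵥ Pi.single x 1}

lemma permMat_mulVec_mem_lowerSpan (π : Equiv.Perm (Fin k)) {w : (Fin k → Fin d) → ℂ}
    (hw : w ∈ lowerSpan k μ) : permMat d k π *ᵥ w ∈ lowerSpan k μ := by
  suffices lowerSpan k μ ≤ (lowerSpan k μ).comap (permMat d k π).mulVecLin from this hw
  refine Submodule.span_le.mpr ?_
  rintro _ ⟨n, x, hn, hx, rfl⟩
  refine Submodule.subset_span ⟨n, _, hn, hx.comp_perm π⁻¹, ?_⟩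
  rw [mulVecLin_apply, mulVec_mulVec, ← (commute_tensorPow_permMat n π).eq, ← mulVec_mulVec,
    permMat_mulVec_single]

lemma antisymmetrizer_mulVec_mem_lowerSpan {β : Type*} [DecidableEq β] (f : Fin k → β)
    {w : (Fin k → Fin d) → ℂ} (hw : w ∈ lowerSpan k μ) :
    antisymmetrizer d k f *ᵥ w ∈ lowerSpan k μ := by
  rw [antisymmetrizer, sum_mulVec]
  refine Submodule.sum_mem _ fun π _ => ?_
  rw [smul_mulVec]
  exact Submodule.smul_mem _ _ (permMat_mulVec_mem_lowerSpan π hw)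

variable {lam : ℕ → ℕ} {t : Fin k → ℕ × ℕ} (ht : Set.BijOn t Set.univ (youngCells d k lam))

lemma antisymmetrizer_mulVec_mem_lowerSpan_of_mem_tensorPowSpan (hanti : Antitone lam)
    (hle : ∀ a < d, lam a ≤ k) {w : (Fin k → Fin d) → ℂ} (hw : w ∈ tensorPowSpan (rowWord ht)) :
    antisymmetrizer d k (fun j => (t j).2) *ᵥ w ∈ lowerSpan k fun a : Fin d => lam a := by
  set C := antisymmetrizer d k fun j => (t j).2
  set N := lowerSpan k fun a : Fin d => lam a
  suffices tensorPowSpan (rowWord ht) ≤ N.comap C.mulVecLin from this hw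
  refine Submodule.span_le.mpr ?_
  rintro _ ⟨g, rfl⟩
  let curve (g : Matrix (Fin d) (Fin d) ℂ) := C *ᵥ tensorPow d k g *ᵥ Pi.single (rowWord ht) 1
  have curve_cont : Continuous curve :=
    continuous_const.matrix_mulVec (continuous_tensorPow.matrix_mulVec continuous_const)
  have closed : IsClosed (curve ⁻¹' N) := N.closed_of_finiteDimensional.preimage curve_cont
  refine closed.closure_subset_iff.mpr ?_ (dense_lowerUnitriangular_mul_upperTriangular g)
  rintro _ ⟨n, u, hn, hu, rfl⟩
  have curve_eq : curve (n * u) = (∏ j, u (rowWord ht j) (rowWord ht j)) •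
      C *ᵥ tensorPow d k n *ᵥ Pi.single (rowWord ht) 1 := by
    have comm := (commute_tensorPow_antisymmetrizer (fun j => (t j).2) n).eq
    calc curve (n * u)
        = tensorPow d k n *ᵥ C *ᵥ tensorPow d k u *ᵥ Pi.single (rowWord ht) 1 := by
          simp only [curve, tensorPow_mul, mulVec_mulVec, ← Matrix.mul_assoc, comm, C]
      _ = _ := by
          rw [antisymmetrizer_mulVec_upper_mulVec_rowWord ht hanti hu, mulVec_smul,
            mulVec_mulVec, comm, mulVec_mulVec]
  rw [Set.mem_preimage, curve_eq]
  exact Submodule.smul_mem _ _ (antisymmetrizer_mulVec_mem_lowerSpan _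
    (Submodule.subset_span ⟨n, _, hn, hasContent_rowWord ht hle, rfl⟩))

theorem isotypic_le_lowerSpan (hanti : Antitone lam) (hle : ∀ a < d, lam a ≤ k) :
    isotypic d k lam ≤ lowerSpan k fun a : Fin d => lam a := by
  refine Submodule.span_le.mpr ?_
  rintro _ ⟨t, ht, π, v, rfl⟩
  rw [youngSymMat_eq_antisymmetrizer_mul_symmetrizer, ← mulVec_mulVec]
  have symm_eq : symmetrizer d k (fun j => (t j).1) = symmetrizer d k (rowWord ht) := by
    simp only [symmetrizer, rowWord, Fin.ext_iff]
  rw [symm_eq]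
  exact permMat_mulVec_mem_lowerSpan π (antisymmetrizer_mulVec_mem_lowerSpan_of_mem_tensorPowSpan
    ht hanti hle (symmetrizer_mulVec_mem_tensorPowSpan _ v))

end LowerSpan

section LowerSpanBounds

variable {d k : ℕ} {μ : Fin d → ℕ}

lemma exists_hasContent_le_of_mem_lowerSpan {w : (Fin k → Fin d) → ℂ} (hw : w ∈ lowerSpan k μ)
    {y : Fin k → Fin d} (hy : w y ≠ 0) : ∃ x, HasContent μ x ∧ x ≤ y := by
  by_contra! h
  suffices lowerSpan k μ ≤ LinearMap.ker (LinearMap.proj y) from hy (this hw)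
  refine Submodule.span_le.mpr ?_
  rintro _ ⟨n, x, hn, hx, rfl⟩
  obtain ⟨j, hj⟩ : ∃ j, y j < x j := by simpa [Pi.le_def] using h x hx
  rw [SetLike.mem_coe, LinearMap.mem_ker, LinearMap.proj_apply, mulVec_single_one]
  exact prod_eq_zero (mem_univ j) (hn.1 hj)

/-- The positions strictly below the diagonal of a `d × d` matrix. -/
abbrev LowerPos (d : ℕ) : Type :=
  Σ a : Fin d, Iio a

lemma card_lowerPos : Fintype.card (LowerPos d) = d * (d - 1) / 2 := by
  simp only [Fintype.card_sigma, Fintype.card_coe, Fin.card_Iio, ← sum_range_id, sum_range]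

lemma IsLowerUnitriangular.prod_apply_eq {ι R : Type*} [Fintype ι] [CommRing R]
    {n : Matrix (Fin d) (Fin d) R} (hn : IsLowerUnitriangular n) {x y : ι → Fin d} (hxy : x ≤ y) :
    ∏ j, n (y j) (x j) = ∏ p : LowerPos d, n p.1 p.2 ^ #{j | (y j, x j) = (p.1, ↑p.2)} :=
  calc ∏ j, n (y j) (x j)
      = ∏ a, ∏ b, n a b ^ #{j | (y j, x j) = (a, b)} := by
        rw [← Fintype.prod_prod_type']
        exact HasContent.prod_comp (x := fun j => (y j, x j)) (fun _ => rfl) fun p => n p.1 p.2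
    _ = ∏ a, ∏ b ∈ Iio a, n a b ^ #{j | (y j, x j) = (a, b)} := by
        refine prod_congr rfl fun a _ => (prod_subset (subset_univ _) fun b _ hb => ?_).symm
        rcases (not_lt.mp (mem_Iio.not.mp hb)).eq_or_lt with rfl | hab
        · rw [hn.2, one_pow]
        · rw [filter_false_of_mem, card_empty, pow_zero]
          rintro j - h
          obtain ⟨rfl, rfl⟩ := Prod.mk.inj h
          exact hab.not_ge (hxy j)
    _ = ∏ p : LowerPos d, n p.1 p.2 ^ #{j | (y j, x j) = (p.1, ↑p.2)} := by
        rw [Fintype.prod_sigma]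
        exact prod_congr rfl fun a _ => (prod_coe_sort (Iio a) _).symm

/-- The number of tensor factors in which a lower triangular matrix moves `e_x` to `e_y` through
its entry at a given position below the diagonal. -/
def lowerCount (x y : Fin k → Fin d) (p : LowerPos d) : Fin (k + 1) :=
  ⟨#{j | (y j, x j) = (p.1, ↑p.2)}, Nat.lt_succ_of_le (card_finset_fin_le _)⟩

/-- The coefficient in `n^{⊗k} e_x` of the monomial with exponents `α` in the entries of the lower
unitriangular matrix `n`. -/
def lowerCoeff (α : LowerPos d → Fin (k + 1)) (x : Fin k → Fin d) : (Fin k → Fin d) → ℂ :=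
  ∑ y with (∀ j, x j ≤ y j) ∧ lowerCount x y = α, Pi.single y 1

lemma IsLowerUnitriangular.tensorPow_mulVec_single {n : Matrix (Fin d) (Fin d) ℂ}
    (hn : IsLowerUnitriangular n) (x : Fin k → Fin d) :
    tensorPow d k n *ᵥ Pi.single x 1 =
      ∑ α : LowerPos d → Fin (k + 1), (∏ p, n p.1 p.2 ^ (α p : ℕ)) • lowerCoeff α x := by
  calc tensorPow d k n *ᵥ Pi.single x 1
      = ∑ y with ∀ j, x j ≤ y j, (∏ j, n (y j) (x j)) • Pi.single y 1 := by
        rw [_root_.tensorPow_mulVec_single]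
        refine (sum_subset (subset_univ _) fun y _ hy => ?_).symm
        obtain ⟨j, hj⟩ : ∃ j, y j < x j := by simpa using hy
        rw [prod_eq_zero (mem_univ j) (hn.1 hj), zero_smul]
    _ = ∑ y with ∀ j, x j ≤ y j, (∏ p, n p.1 p.2 ^ (lowerCount x y p : ℕ)) • Pi.single y 1 :=
        sum_congr rfl fun y hy => by rw [hn.prod_apply_eq (mem_filter.mp hy).2]; rfl
    _ = ∑ α, ∑ y with (∀ j, x j ≤ y j) ∧ lowerCount x y = α,
          (∏ p, n p.1 p.2 ^ (α p : ℕ)) • Pi.single y 1 := by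
        rw [← sum_fiberwise _ (lowerCount x)]
        refine sum_congr rfl fun α _ => ?_
        rw [filter_filter]
        exact sum_congr rfl fun y hy => by rw [(mem_filter.mp hy).2.2]
    _ = _ := by simp only [lowerCoeff, smul_sum]

lemma finrank_lowerSpan_le : Module.finrank ℂ (lowerSpan k μ) ≤
    (k + 1) ^ (d * (d - 1) / 2) * #{x : Fin k → Fin d | HasContent μ x} := by
  let gen (q : (LowerPos d → Fin (k + 1)) × {x : Fin k → Fin d // HasContent μ x}) :=
    lowerCoeff q.1 q.2.1
  have lowerSpan_le : lowerSpan k μ ≤ Submodule.span ℂ (Set.range gen) := by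
    refine Submodule.span_le.mpr ?_
    rintro _ ⟨n, x, hn, hx, rfl⟩
    rw [hn.tensorPow_mulVec_single]
    exact Submodule.sum_mem _ fun α _ =>
      Submodule.smul_mem _ _ (Submodule.subset_span ⟨(α, ⟨x, hx⟩), rfl⟩)
  calc Module.finrank ℂ (lowerSpan k μ)
      ≤ (Set.range gen).finrank ℂ := Submodule.finrank_mono lowerSpan_le
    _ ≤ Fintype.card ((LowerPos d → Fin (k + 1)) × {x : Fin k → Fin d // HasContent μ x}) :=
        finrank_range_le_card gen
    _ = _ := by
        rw [Fintype.card_prod, Fintype.card_fun, Fintype.card_fin, card_lowerPos,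
          Fintype.card_subtype]

end LowerSpanBounds

section Projection

variable {I : Type*} [Fintype I]

lemma commute_of_range_mem_invtSubmodule {R : Type*} [CommRing R] [StarRing R] {P M : Matrix I I R}
    (hP : IsStarProjection P)
    (hM : LinearMap.range P.mulVecLin ∈ Module.End.invtSubmodule M.mulVecLin)
    (hM' : LinearMap.range P.mulVecLin ∈ Module.End.invtSubmodule Mᴴ.mulVecLin) :
    Commute P M := by
  classical
  have hPH : Pᴴ = P := hP.isSelfAdjoint
  have conj_eq {N : Matrix I I R}
      (hN : LinearMap.range P.mulVecLin ∈ Module.End.invtSubmodule N.mulVecLin) :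
      P * N * P = N * P := by
    have hPlin : IsIdempotentElem (toLin' P) := hP.isIdempotentElem.map toLinAlgEquiv'
    apply toLin'.injective
    simpa only [toLin'_mul, LinearMap.comp_assoc] using
      LinearMap.IsIdempotentElem.conj_eq_of_range_mem_invtSubmodule (T := toLin' N) hPlin hN
  have hPMP := congrArg conjTranspose (conj_eq hM')
  simp only [conjTranspose_mul, conjTranspose_conjTranspose, hPH, ← Matrix.mul_assoc] at hPMP
  exact hPMP.symm.trans (conj_eq hM)

lemma trace_eq_finrank_range {K : Type*} [Field K] {P : Matrix I I K} (hP : IsIdempotentElem P) :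
    P.trace = Module.finrank K (LinearMap.range P.mulVecLin) := by
  classical
  have hPlin : IsIdempotentElem (toLin' P) := hP.map toLinAlgEquiv'
  rw [← trace_toLin'_eq, (LinearMap.IsIdempotentElem.isProj_range _ hPlin).trace, toLin'_apply']

lemma re_trace_mul_diagonal_le [DecidableEq I] {P : Matrix I I ℂ} (hP : IsStarProjection P)
    {f : I → ℝ} {c : ℝ} (hf : ∀ i, P i i ≠ 0 → f i ≤ c) :
    (P * diagonal fun i => (f i : ℂ)).trace.re ≤
      Module.finrank ℂ (LinearMap.range P.mulVecLin) * c := by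
  have hPH : Pᴴ = P := hP.isSelfAdjoint
  have diag_nonneg (i : I) : 0 ≤ P i i := by
    have := (posSemidef_conjTranspose_mul_self P).diag_nonneg (i := i)
    rwa [hPH, hP.isIdempotentElem.eq] at this
  have finrank_eq : (Module.finrank ℂ (LinearMap.range P.mulVecLin) : ℝ) = ∑ i, (P i i).re := by
    rw [← Complex.natCast_re, ← trace_eq_finrank_range hP.isIdempotentElem, trace, Complex.re_sum]
    rfl
  rw [finrank_eq, sum_mul, trace, Complex.re_sum]
  refine sum_le_sum fun i _ => ?_
  rw [diag_apply, mul_diagonal, Complex.re_mul_ofReal]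
  rcases eq_or_ne (P i i) 0 with hi | hi
  · simp [hi]
  · exact mul_le_mul_of_nonneg_left (hf i hi) (Complex.nonneg_iff.mp (diag_nonneg i)).1

end Projection

section Diagonalization

variable {d k : ℕ}

lemma exists_eq_mul_diagonal_mul_conjTranspose {m 𝕜 : Type*} [Fintype m] [DecidableEq m]
    [RCLike 𝕜] {ρ : Matrix m m 𝕜} (hρ : ρ.IsHermitian) {r : m → ℝ} {σ : Equiv.Perm m}
    (hr : ∀ i, r i = hρ.eigenvalues (σ i)) :
    ∃ U : Matrix m m 𝕜, Uᴴ * U = 1 ∧ ρ = U * diagonal (fun i => (r i : 𝕜)) * Uᴴ := by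
  let V : Matrix m m 𝕜 := hρ.eigenvectorUnitary
  have hV : Vᴴ * V = 1 := Unitary.coe_star_mul_self hρ.eigenvectorUnitary
  have hρV : ρ = V * diagonal (fun i => (hρ.eigenvalues i : 𝕜)) * Vᴴ :=
    hρ.spectral_theorem.trans (Unitary.conjStarAlgAut_apply _ _)
  have diagonal_eq : diagonal (fun i => (r i : 𝕜)) =
      (diagonal fun i => (hρ.eigenvalues i : 𝕜)).submatrix σ σ := by
    simp only [hr]
    exact (submatrix_diagonal_equiv (fun i => (hρ.eigenvalues i : 𝕜)) σ).symm
  refine ⟨V.submatrix id σ, ?_, ?_⟩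
  · rw [conjTranspose_submatrix, ← submatrix_mul _ _ _ _ _ Function.bijective_id, hV,
      submatrix_one_equiv]
  · rw [diagonal_eq, conjTranspose_submatrix, submatrix_mul_equiv, submatrix_mul_equiv,
      submatrix_id_id]
    exact hρV

lemma trace_mul_tensorPow_conj {P : Matrix (Fin k → Fin d) (Fin k → Fin d) ℂ}
    {U U' A : Matrix (Fin d) (Fin d) ℂ} (hP : Commute P (tensorPow d k U)) (hU : U' * U = 1) :
    (P * tensorPow d k (U * A * U')).trace = (P * tensorPow d k A).trace := by
  rw [tensorPow_mul, tensorPow_mul, ← Matrix.mul_assoc, ← Matrix.mul_assoc, trace_mul_comm, hP.eq,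
    ← Matrix.mul_assoc, ← Matrix.mul_assoc, ← tensorPow_mul, hU, tensorPow_one, Matrix.one_mul]

end Diagonalization

section KeylWerner

variable {d k : ℕ} {lam : ℕ → ℕ} {P : Matrix (Fin k → Fin d) (Fin k → Fin d) ℂ}

lemma commute_tensorPow_of_range_eq_isotypic (hP : IsStarProjection P)
    (hPrange : LinearMap.range P.mulVecLin = isotypic d k lam) (g : Matrix (Fin d) (Fin d) ℂ) :
    Commute P (tensorPow d k g) := by
  refine commute_of_range_mem_invtSubmodule hP ?_ ?_ <;> rw [hPrange]
  · exact isotypic_mem_invtSubmodule_tensorPow g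
  · rw [conjTranspose_tensorPow]
    exact isotypic_mem_invtSubmodule_tensorPow gᴴ

lemma prod_le_prod_pow_of_mem_lowerSpan {r : Fin d → ℝ} (hr : Antitone r) (hr₀ : ∀ i, 0 ≤ r i)
    {μ : Fin d → ℕ} {w : (Fin k → Fin d) → ℂ} (hw : w ∈ lowerSpan k μ) {y : Fin k → Fin d}
    (hy : w y ≠ 0) : ∏ j, r (y j) ≤ ∏ i, r i ^ μ i := by
  obtain ⟨x, hx, hxy⟩ := exists_hasContent_le_of_mem_lowerSpan hw hy
  rw [← hx.prod_comp]
  exact prod_le_prod (fun j _ => hr₀ _) fun j _ => hr (hxy j)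

lemma re_trace_mul_tensorPow_diagonal_le (hanti : Antitone lam) (hle : ∀ a < d, lam a ≤ k)
    (hP : IsStarProjection P) (hPrange : LinearMap.range P.mulVecLin = isotypic d k lam)
    {r : Fin d → ℝ} (hr : Antitone r) (hr₀ : ∀ i, 0 ≤ r i) :
    (P * tensorPow d k (diagonal fun i => (r i : ℂ))).trace.re ≤
      (k + 1) ^ (d * (d - 1) / 2) *
        (#{x : Fin k → Fin d | HasContent (fun a : Fin d => lam a) x} *
          ∏ i : Fin d, r i ^ lam i) := by
  have range_le : LinearMap.range P.mulVecLin ≤ lowerSpan k fun a : Fin d => lam a :=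
    hPrange.trans_le (isotypic_le_lowerSpan hanti hle)
  have finrank_le := (Submodule.finrank_mono range_le).trans finrank_lowerSpan_le
  rw [tensorPow_diagonal, ← mul_assoc]
  simp only [← Complex.ofReal_prod]
  refine (re_trace_mul_diagonal_le hP fun y hy => prod_le_prod_pow_of_mem_lowerSpan hr hr₀
    (range_le ⟨Pi.single y 1, rfl⟩) (y := y) (by simpa using hy)).trans ?_
  exact mul_le_mul_of_nonneg_right (by exact_mod_cast finrank_le)
    (prod_nonneg fun i _ => pow_nonneg (hr₀ i) _)

theorem stmt_8_general (hk : 0 < k) {ρ : Matrix (Fin d) (Fin d) ℂ} (hρ : ρ.PosSemidef)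
    {r : Fin d → ℝ} (hr_anti : Antitone r)
    (hr_spec : ∃ σ : Equiv.Perm (Fin d), ∀ i, r i = hρ.1.eigenvalues (σ i))
    (hanti : Antitone lam) (hsum : ∑ i ∈ range d, lam i = k) (hP : IsStarProjection P)
    (hPrange : LinearMap.range P.mulVecLin = isotypic d k lam) :
    (P * tensorPow d k ρ).trace.re ≤
      (k + 1) ^ (d * (d - 1) / 2) *
        Real.exp (-(k : ℝ) * ∑ i : Fin d, (if lam i = 0 then 0 else
          ((lam i : ℝ) / k) * (Real.log ((lam i : ℝ) / k) - Real.log (r i)))) := by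
  obtain ⟨σ, hσ⟩ := hr_spec
  have hr₀ (i : Fin d) : 0 ≤ r i := (hρ.eigenvalues_nonneg _).trans_eq (hσ i).symm
  have hle (a : ℕ) (ha : a < d) : lam a ≤ k :=
    hsum ▸ single_le_sum (fun _ _ => Nat.zero_le _) (mem_range.mpr ha)
  have hsum' : ∑ a : Fin d, lam a = k := (sum_range _).symm.trans hsum
  obtain ⟨U, hU, hρU⟩ := exists_eq_mul_diagonal_mul_conjTranspose hρ.1 hσ
  calc (P * tensorPow d k ρ).trace.re
      = (P * tensorPow d k (U * diagonal (fun i => (r i : ℂ)) * Uᴴ)).trace.re :=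
        congrArg (fun A => (P * tensorPow d k A).trace.re) hρU
    _ = (P * tensorPow d k (diagonal fun i => (r i : ℂ))).trace.re := by
        rw [trace_mul_tensorPow_conj (commute_tensorPow_of_range_eq_isotypic hP hPrange U) hU]
    _ ≤ (k + 1) ^ (d * (d - 1) / 2) *
          (#{x : Fin k → Fin d | HasContent (fun a : Fin d => lam a) x} *
            ∏ i : Fin d, r i ^ lam i) :=
        re_trace_mul_tensorPow_diagonal_le hanti hle hP hPrange hr_anti hr₀
    _ ≤ _ := mul_le_mul_of_nonneg_left
        (card_hasContent_mul_prod_pow_le_exp_neg_relEntropy hk hsum' hr₀) (by positivity)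

end KeylWerner

/-- Keyl–Werner estimate: if `ρ` is a density operator on `ℂ^d` with (ordered) eigenvalue
vector `r`, `lam` a partition of `k` with at most `d` parts, and `P` the orthogonal projection
onto the `lam`-isotypic component of `(ℂ^d)^{⊗k}`, then
`tr(P ρ^{⊗k}) ≤ (k+1)^{d(d−1)/2} exp(−k·D(lam/k ‖ r))`. -/
theorem stmt_8 {d k : ℕ} (hk : 0 < k)
    (ρ : Matrix (Fin d) (Fin d) ℂ) (hρ : ρ.PosSemidef) (hρtr : ρ.trace = 1)
    (r : Fin d → ℝ) (hr_anti : Antitone r)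
    (hr_spec : ∃ σ : Equiv.Perm (Fin d), ∀ i, r i = hρ.1.eigenvalues (σ i))
    (lam : ℕ → ℕ) (hanti : Antitone lam) (hsupp : ∀ i, d ≤ i → lam i = 0)
    (hsum : ∑ i ∈ range d, lam i = k)
    (P : Matrix (Fin k → Fin d) (Fin k → Fin d) ℂ)
    (hPidem : P * P = P) (hPherm : P.IsHermitian)
    (hPrange : LinearMap.range P.mulVecLin = isotypic d k lam) :
    (P * tensorPow d k ρ).trace.re ≤
      (k + 1) ^ (d * (d - 1) / 2) *
        Real.exp (-(k : ℝ) * ∑ i : Fin d, (if lam i = 0 then 0 else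
          ((lam i : ℝ) / k) * (Real.log ((lam i : ℝ) / k) - Real.log (r i)))) :=
  stmt_8_general hk hρ hr_anti hr_spec hanti hsum ⟨hPidem, hPherm⟩ hPrange

end
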